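/- Let G be a bipartite graph with parts X and Y such that every vertex of X has degree at least 1 and every vertex of Y has degree at most n. If |X| ≥ n(p−1)+1, then G contains an induced matching of size p, i.e., there exist distinct vertices x₁,…,x_p ∈ X and y₁,…,y_p ∈ Y such that x_i is adjacent to y_j if and only if i = j. -/

import Mathlib

/-! Choose an inclusion-minimal set `u ⊆ Y` that meets the neighbourhood of every `x ∈ X`. By
minimality each `y ∈ u` has a private neighbour: some `x ∈ X` whose only neighbour in `u` is `y`,
so picking one for each `y ∈ u` matches all of `u` by an induced matching. On the other hand
`X` is covered by `|u|` neighbourhoods of size at most `n`, whence `n (p - 1) < |X| ≤ n |u|`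
and `p ≤ |u|`. -/

open Finset

section Relation

variable {α β ι κ : Type*} {r : α → β → Prop} {s : Set α} {t : Set β}

/-- `t` dominates `s` in the bipartite graph with edge relation `r`: every vertex of `s` has a
neighbour in `t`. Domination is one-sided, the two sides being separate types. -/
def Dominates (r : α → β → Prop) (t : Set β) (s : Set α) : Prop :=
  ∀ a ∈ s, ∃ b ∈ t, r a b

/-- The edges `x i — y i` form an induced matching in the bipartite graph with edge relation `r`.
Being indexed by `ι`, such a matching has the cardinality of `ι` as its size: the condition forces
`x` and `y` to be injective. -/
def IsInducedMatching (r : α → β → Prop) (x : ι → α) (y : ι → β) : Prop :=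
  ∀ i j, r (x i) (y j) ↔ i = j

namespace IsInducedMatching

variable {x : ι → α} {y : ι → β}

lemma swap (h : IsInducedMatching r x y) : IsInducedMatching (Function.swap r) y x :=
  fun i j ↦ (h j i).trans eq_comm

lemma injective_left (h : IsInducedMatching r x y) : Function.Injective x :=
  fun i j hij ↦ (h i j).1 (hij ▸ (h j j).2 rfl)

lemma injective_right (h : IsInducedMatching r x y) : Function.Injective y :=
  h.swap.injective_left

lemma comp_embedding (h : IsInducedMatching r x y) (e : κ ↪ ι) :
    IsInducedMatching r (x ∘ e) (y ∘ e) :=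
  fun i j ↦ (h (e i) (e j)).trans e.injective.eq_iff

end IsInducedMatching

namespace Dominates

lemma exists_finite_subset (h : Dominates r t s) (hs : s.Finite) :
    ∃ u ⊆ t, u.Finite ∧ Dominates r u s := by
  have := hs.to_subtype
  choose f hft hf using fun a : s ↦ h a a.2
  exact ⟨Set.range f, Set.range_subset_iff.2 hft, Set.finite_range f,
    fun a ha ↦ ⟨f ⟨a, ha⟩, Set.mem_range_self _, hf ⟨a, ha⟩⟩⟩

lemma exists_minimal_subset (h : Dominates r t s) (ht : t.Finite) :
    ∃ u ⊆ t, Minimal (Dominates r · s) u := by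
  obtain ⟨u, hut, hu⟩ := (ht.finite_subsets.inter_of_left {u | Dominates r u s}).exists_le_minimal
    ⟨Set.Subset.rfl, h⟩
  exact ⟨u, hut, hu.prop.2, fun v hv hvu ↦ hu.le_of_le ⟨hvu.trans hut, hv⟩ hvu⟩

lemma exists_private_neighbor_of_minimal (ht : Minimal (Dominates r · s) t) {b : β} (hb : b ∈ t) :
    ∃ a ∈ s, ∀ c ∈ t, r a c ↔ c = b := by
  have not_dominates : ¬ Dominates r (t \ {b}) s :=
    fun h ↦ ht.notMem_of_prop_sdiff_singleton h hb
  simp only [Dominates, not_forall, not_exists, not_and] at not_dominates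
  obtain ⟨a, ha, hab⟩ := not_dominates
  have eq_of_rel : ∀ c ∈ t, r a c → c = b :=
    fun c hc hac ↦ by_contra fun hcb ↦ hab c ⟨hc, hcb⟩ hac
  obtain ⟨c, hc, hac⟩ := ht.prop a ha
  obtain rfl := eq_of_rel c hc hac
  exact ⟨a, ha, fun d hd ↦ ⟨eq_of_rel d hd, fun hdc ↦ hdc ▸ hac⟩⟩

lemma exists_isInducedMatching_of_minimal (ht : Minimal (Dominates r · s) t) :
    ∃ x : t → α, (∀ b, x b ∈ s) ∧ IsInducedMatching r x Subtype.val := by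
  choose x hxs hx using fun b : t ↦ exists_private_neighbor_of_minimal ht b.2
  exact ⟨x, hxs, fun b c ↦ (hx b c c.2).trans (Subtype.ext_iff.symm.trans eq_comm)⟩

lemma card_le_card_mul [∀ a b, Decidable (r a b)] {s : Finset α} {t : Finset β} {n : ℕ}
    (h : Dominates r t s) (hn : ∀ b ∈ t, #(s.bipartiteBelow r b) ≤ n) : #s ≤ #t * n := by
  have one_le_card : ∀ a ∈ s, 1 ≤ #(t.bipartiteAbove r a) := fun a ha ↦ by
    obtain ⟨b, hb, hab⟩ := h a ha
    exact card_pos.2 ⟨b, (mem_bipartiteAbove r).2 ⟨hb, hab⟩⟩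
  simpa only [mul_one] using card_mul_le_card_mul r one_le_card hn

end Dominates

theorem induced_matching_lemma_general [∀ a b, Decidable (r a b)] {s : Finset α} {n p : ℕ}
    (hdom : Dominates r t s) (hn : ∀ b ∈ t, #(s.bipartiteBelow r b) ≤ n)
    (hcard : n * (p - 1) + 1 ≤ #s) :
    ∃ (x : Fin p → α) (y : Fin p → β), Function.Injective x ∧ Function.Injective y ∧
      (∀ i, x i ∈ s) ∧ (∀ i, y i ∈ t) ∧ (∀ i j, r (x i) (y j) ↔ i = j) := by
  obtain ⟨t', ht't, ht'fin, hdom'⟩ := hdom.exists_finite_subset s.finite_toSet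
  obtain ⟨u, hut', hu⟩ := hdom'.exists_minimal_subset ht'fin
  have hut : u ⊆ t := hut'.trans ht't
  lift u to Finset β using ht'fin.subset hut'
  have hpu : p ≤ #u := by
    have hlt : n * (p - 1) < n * #u :=
      hcard.trans (mul_comm n #u ▸ hu.prop.card_le_card_mul fun b hb ↦ hn b (hut hb))
    exact Nat.le_of_pred_lt (Nat.lt_of_mul_lt_mul_left hlt)
  obtain ⟨x, hxs, hx⟩ := Dominates.exists_isInducedMatching_of_minimal hu
  let e : Fin p ↪ u := (Fin.castLEEmb hpu).trans u.equivFin.symm.toEmbedding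
  have hxe := hx.comp_embedding e
  exact ⟨x ∘ e, Subtype.val ∘ e, hxe.injective_left, hxe.injective_right, fun i ↦ hxs (e i),
    fun i ↦ hut (e i).2, hxe⟩

end Relation

section Graph

variable {V : Type*} {G : SimpleGraph V}

lemma dominates_adj_of_isBipartiteWith {s t : Set V} (hG : G.IsBipartiteWith s t)
    (hs : ∀ v ∈ s, (G.neighborSet v).Nonempty) : Dominates G.Adj t s := fun v hv ↦
  (hs v hv).imp fun _ hw ↦ ⟨SimpleGraph.isBipartiteWith_neighborSet_subset hG hv hw, hw⟩

lemma card_bipartiteBelow_adj_le_card_neighborSet [DecidableRel G.Adj] (s : Finset V) (v : V)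
    [Finite (G.neighborSet v)] : #(s.bipartiteBelow G.Adj v) ≤ Nat.card (G.neighborSet v) := by
  rw [Nat.card_coe_set_eq, ← Set.ncard_coe_finset]
  exact Set.ncard_le_ncard (fun w hw ↦ ((mem_bipartiteBelow G.Adj).1 hw).2.symm)
    (Set.toFinite (G.neighborSet v))

end Graph

/-- Induced matching lemma: in a bipartite graph with parts `X, Y`, if every
vertex of `X` has degree at least `1`, every vertex of `Y` has degree at most
`n`, and `|X| ≥ n(p-1)+1`, then there is an induced matching of size `p`. -/
theorem induced_matching_lemma {V : Type*} [Fintype V] (G : SimpleGraph V)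
    (X Y : Finset V) (n p : ℕ) (hn : 1 ≤ n) (hp : 1 ≤ p)
    (hpart : ∀ v : V, (v ∈ X ∧ v ∉ Y) ∨ (v ∈ Y ∧ v ∉ X))
    (hbip : ∀ u v : V, G.Adj u v → (u ∈ X ∧ v ∈ Y) ∨ (u ∈ Y ∧ v ∈ X))
    (hX : ∀ x ∈ X, 1 ≤ Nat.card (G.neighborSet x))
    (hY : ∀ y ∈ Y, Nat.card (G.neighborSet y) ≤ n)
    (hcard : n * (p - 1) + 1 ≤ X.card) :
    ∃ (x y : Fin p → V), Function.Injective x ∧ Function.Injective y ∧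
      (∀ i, x i ∈ X) ∧ (∀ i, y i ∈ Y) ∧
      (∀ i j, G.Adj (x i) (y j) ↔ i = j) := by
  classical
  have hG : G.IsBipartiteWith X Y :=
    ⟨Set.disjoint_left.2 fun v hvX hvY ↦ (hpart v).elim (·.2 hvY) (·.2 hvX), hbip⟩
  have hdom : Dominates G.Adj Y X := dominates_adj_of_isBipartiteWith hG fun x hx ↦
    Set.nonempty_coe_sort.1 (Nat.card_pos_iff.1 (hX x hx)).1
  exact induced_matching_lemma_general hdom
    (fun y hy ↦ (card_bipartiteBelow_adj_le_card_neighborSet X y).trans (hY y hy)) hcard
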